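/- N^{(3)}(x) ≤ N^{(4)}(x) for every finitely supported x : ℕ → ℝ. -/

import Mathlib

/-!
Call a successive triple `T 0 < T 1 < T 2` of subsets of the support of `y` a *splitting* of `y`,
and let `M y` (`tripleMax`) be the largest value of `∑ N4 (T r y)` over all splittings.

* If `n ≤ E 1 < ⋯ < E n`, splitting each `E i x` optimally gives `3 n` successive sets that are
  allowed in the implicit equation of `N4`, so `1/2 ∑ M (E i x) ≤ N4 x` (`half_sum_tripleMax_le`).
* `N2 ≤ M`, by induction on the iteration (`N2Aux_le_tripleMax`). In the implicit equation of `N2`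
  the sets split into three groups: the `E i` with `i < i₀`, the `F j`, and the `E i` with `i > i₀`.
  Each group is an admissible family by itself (after padding with empty sets), so by the induction
  hypothesis and the first point its half-sum is at most `N4` of the part of `y` it lives on; the
  three parts form a splitting of `y`.

Inserting `N2 ≤ M` in the definition of `N3` and using the first point once more gives `N3 ≤ N4`.
-/

noncomputable section

/-- sup norm of a finitely supported sequence -/
def supNorm (x : ℕ →₀ ℝ) : ℝ := ⨆ i, |x i|

/-- coordinate restriction of `x` to the finite set `E` -/
def restr (E : Finset ℕ) (x : ℕ →₀ ℝ) : ℕ →₀ ℝ := x.filter (· ∈ E)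

/-- an admissible family of `m` successive finite sets whose elements are `≥ n`. -/
def AdmissibleOn (n m : ℕ) (E : Fin m → Finset ℕ) : Prop :=
  (∀ i j : Fin m, i < j → ∀ a ∈ E i, ∀ b ∈ E j, a < b) ∧
  (∀ i : Fin m, ∀ a ∈ E i, n ≤ a)

/-- `n ≤ E 0 < ⋯ < E (n-1)` -/
def Admissible (n : ℕ) (E : Fin n → Finset ℕ) : Prop := AdmissibleOn n n E

/-- the family `F` lies strictly between `E (i₀ - 1)` and `E (i₀ + 1)`. -/
def Between {n : ℕ} (E : Fin n → Finset ℕ) (i₀ : Fin n) {m : ℕ}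
    (F : Fin m → Finset ℕ) : Prop :=
  ∀ j : Fin m, ∀ b ∈ F j,
    (∀ i : Fin n, i < i₀ → ∀ a ∈ E i, a < b) ∧
    (∀ i : Fin n, i₀ < i → ∀ a ∈ E i, b < a)

/-- the iteration defining `N_c^{(1)}`. -/
def N1Aux (c : ℝ) : ℕ → (ℕ →₀ ℝ) → ℝ
  | 0, x => supNorm x
  | k + 1, x => max (supNorm x)
      (sSup {r : ℝ | ∃ (n : ℕ) (E : Fin n → Finset ℕ) (i₀ : Fin n), Admissible n E ∧
        r = (1 / 2) * (∑ i ∈ Finset.univ.erase i₀, N1Aux c k (restr (E i) x)) +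
            c * N1Aux c k (restr (E i₀) x)})

/-- `N_c^{(1)}`, the increasing limit of its iteration. -/
def N1 (c : ℝ) (x : ℕ →₀ ℝ) : ℝ := ⨆ k, N1Aux c k x

/-- the iteration defining `N_c^{(2)}`. -/
def N2Aux (c : ℝ) : ℕ → (ℕ →₀ ℝ) → ℝ
  | 0, x => supNorm x
  | k + 1, x => max (supNorm x)
      (sSup {r : ℝ | ∃ (n : ℕ) (E : Fin n → Finset ℕ) (i₀ : Fin n), Admissible n E ∧
        r = (1 / 2) * (∑ i ∈ Finset.univ.erase i₀, N2Aux c k (restr (E i) x)) +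
            c * sSup {t : ℝ | ∃ (m : ℕ) (F : Fin m → Finset ℕ),
                  Admissible m F ∧ Between E i₀ F ∧
                  t = ∑ j, N2Aux c k (restr (F j) x)}})

/-- `N_c^{(2)}`, the increasing limit of its iteration. -/
def N2 (c : ℝ) (x : ℕ →₀ ℝ) : ℝ := ⨆ k, N2Aux c k x

/-- `N^{(3)}(x) = max (‖x‖_∞, sup {(1/2) ∑ N^{(2)}(E_i x) : n ≤ E_1 < ⋯ < E_n})`,
where `N^{(2)} = N_{1/2}^{(2)}`. -/
def N3 (x : ℕ →₀ ℝ) : ℝ :=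
  max (supNorm x)
    (sSup {r : ℝ | ∃ (n : ℕ) (E : Fin n → Finset ℕ), 0 < n ∧ Admissible n E ∧
      r = (1 / 2) * ∑ i, N2 (1 / 2) (restr (E i) x)})

/-- the iteration defining `N^{(4)}`:  at each step
`N^{(4)}(x) = max (‖x‖_∞, sup {(1/2) ∑_{i=1}^{3n} N^{(4)}(E_i x) : n ≤ E_1 < ⋯ < E_{3n}})`. -/
def N4Aux : ℕ → (ℕ →₀ ℝ) → ℝ
  | 0, x => supNorm x
  | k + 1, x => max (supNorm x)
      (sSup {r : ℝ | ∃ (n : ℕ) (E : Fin (3 * n) → Finset ℕ), 0 < n ∧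
        AdmissibleOn n (3 * n) E ∧
        r = (1 / 2) * ∑ i, N4Aux k (restr (E i) x)})

/-- `N^{(4)}`, the increasing limit of its iteration. -/
def N4 (x : ℕ →₀ ℝ) : ℝ := ⨆ k, N4Aux k x

/-! ### Restrictions and the sup norm -/

lemma restr_apply (E : Finset ℕ) (x : ℕ →₀ ℝ) (a : ℕ) :
    restr E x a = if a ∈ E then x a else 0 := by
  simp [restr, Finsupp.filter_apply]

lemma restr_restr (E F : Finset ℕ) (x : ℕ →₀ ℝ) : restr E (restr F x) = restr (E ∩ F) x := by
  ext a
  simp only [restr_apply, Finset.mem_inter]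
  split_ifs <;> simp_all

lemma restr_restr_of_inter_subset {E F : Finset ℕ} {x : ℕ →₀ ℝ}
    (h : ∀ a ∈ E, a ∈ x.support → a ∈ F) : restr E (restr F x) = restr E x := by
  ext a
  simp only [restr_apply]
  by_cases hE : a ∈ E
  · by_cases hx : x a = 0
    · simp [hx]
    · simp [hE, h a hE (Finsupp.mem_support_iff.2 hx)]
  · simp [hE]

lemma restr_support_self (x : ℕ →₀ ℝ) : restr x.support x = x := by
  ext a
  rw [restr_apply]
  split_ifs with h
  · rfl
  · exact (Finsupp.notMem_support_iff.1 h).symm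

/-- The `ℓ¹` norm, used only as an a priori bound that makes all suprema finite. -/
def ellOne (x : ℕ →₀ ℝ) : ℝ := ∑ a ∈ x.support, |x a|

lemma ellOne_nonneg (x : ℕ →₀ ℝ) : 0 ≤ ellOne x :=
  Finset.sum_nonneg fun _ _ => abs_nonneg _

lemma abs_le_ellOne (x : ℕ →₀ ℝ) (a : ℕ) : |x a| ≤ ellOne x := by
  by_cases h : a ∈ x.support
  · exact Finset.single_le_sum (f := fun a => |x a|) (fun _ _ => abs_nonneg _) h
  · rw [Finsupp.notMem_support_iff.1 h, abs_zero]
    exact ellOne_nonneg x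

lemma supNorm_nonneg (x : ℕ →₀ ℝ) : 0 ≤ supNorm x :=
  Real.iSup_nonneg fun _ => abs_nonneg _

lemma supNorm_le_ellOne (x : ℕ →₀ ℝ) : supNorm x ≤ ellOne x :=
  ciSup_le (abs_le_ellOne x)

lemma ellOne_restr (E : Finset ℕ) (x : ℕ →₀ ℝ) :
    ellOne (restr E x) = ∑ a ∈ x.support, if a ∈ E then |x a| else 0 := by
  have hsub : (restr E x).support ⊆ x.support := by
    intro a ha
    rw [Finsupp.mem_support_iff, restr_apply] at ha
    rw [Finsupp.mem_support_iff]
    intro h0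
    simp [h0] at ha
  unfold ellOne
  rw [Finset.sum_subset hsub
    (fun a _ ha => by rw [Finsupp.notMem_support_iff.1 ha, abs_zero])]
  refine Finset.sum_congr rfl fun a _ => ?_
  rw [restr_apply]
  split_ifs <;> simp

lemma sum_ellOne_restr_le {n m : ℕ} {E : Fin m → Finset ℕ} (hE : AdmissibleOn n m E)
    (x : ℕ →₀ ℝ) : ∑ i, ellOne (restr (E i) x) ≤ ellOne x := by
  simp only [ellOne_restr]
  rw [Finset.sum_comm]
  refine Finset.sum_le_sum fun a _ => ?_
  by_cases h : ∃ i, a ∈ E i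
  · obtain ⟨i, hi⟩ := h
    rw [Finset.sum_eq_single i]
    · simp [hi]
    · intro j _ hji
      rw [if_neg]
      intro hj
      rcases lt_or_gt_of_ne hji with hlt | hlt
      · exact lt_irrefl _ (hE.1 j i hlt a hj a hi)
      · exact lt_irrefl _ (hE.1 i j hlt a hi a hj)
    · simp
  · push Not at h
    simp [h]

/-! ### The norm `N4` satisfies its implicit equation -/

lemma N4Aux_nonneg (k : ℕ) (x : ℕ →₀ ℝ) : 0 ≤ N4Aux k x := by
  cases k with
  | zero => exact supNorm_nonneg x
  | succ k => exact (supNorm_nonneg x).trans (le_max_left _ _)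

lemma N4Aux_le_ellOne (k : ℕ) : ∀ x : ℕ →₀ ℝ, N4Aux k x ≤ ellOne x := by
  induction k with
  | zero => exact supNorm_le_ellOne
  | succ k ih =>
    intro x
    refine max_le (supNorm_le_ellOne x) (Real.sSup_le ?_ (ellOne_nonneg x))
    rintro r ⟨n, E, -, hE, rfl⟩
    have h1 := Finset.sum_le_sum fun i (_ : i ∈ Finset.univ) => ih (restr (E i) x)
    have h2 := sum_ellOne_restr_le hE x
    have h3 := ellOne_nonneg x
    linarith

lemma half_sum_N4Aux_le (k : ℕ) (x : ℕ →₀ ℝ) {n : ℕ} (hn : 0 < n)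
    {E : Fin (3 * n) → Finset ℕ} (hE : AdmissibleOn n (3 * n) E) :
    (1 / 2) * ∑ i, N4Aux k (restr (E i) x) ≤ N4Aux (k + 1) x := by
  refine le_max_of_le_right (le_csSup ⟨ellOne x, ?_⟩ ⟨n, E, hn, hE, rfl⟩)
  rintro r ⟨n, E, -, hE, rfl⟩
  have h1 := Finset.sum_le_sum fun i (_ : i ∈ Finset.univ) => N4Aux_le_ellOne k (restr (E i) x)
  have h2 := sum_ellOne_restr_le hE x
  have h3 := ellOne_nonneg x
  linarith

lemma N4Aux_le_succ (k : ℕ) : ∀ x : ℕ →₀ ℝ, N4Aux k x ≤ N4Aux (k + 1) x := by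
  induction k with
  | zero => exact fun x => le_max_left _ _
  | succ k ih =>
    intro x
    refine max_le (le_max_left _ _) (Real.sSup_le ?_ (N4Aux_nonneg _ x))
    rintro r ⟨n, E, hn, hE, rfl⟩
    refine le_trans ?_ (half_sum_N4Aux_le (k + 1) x hn hE)
    have h1 := Finset.sum_le_sum fun i (_ : i ∈ Finset.univ) => ih (restr (E i) x)
    linarith

lemma bddAbove_N4Aux (x : ℕ →₀ ℝ) : BddAbove (Set.range fun k => N4Aux k x) := by
  refine ⟨ellOne x, ?_⟩
  rintro _ ⟨k, rfl⟩
  exact N4Aux_le_ellOne k x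

lemma tendsto_N4Aux (x : ℕ →₀ ℝ) :
    Filter.Tendsto (fun k => N4Aux k x) Filter.atTop (nhds (N4 x)) :=
  tendsto_atTop_ciSup (monotone_nat_of_le_succ fun k => N4Aux_le_succ k x) (bddAbove_N4Aux x)

lemma N4Aux_le_N4 (k : ℕ) (x : ℕ →₀ ℝ) : N4Aux k x ≤ N4 x :=
  le_ciSup (bddAbove_N4Aux x) k

lemma supNorm_le_N4 (x : ℕ →₀ ℝ) : supNorm x ≤ N4 x := N4Aux_le_N4 0 x

lemma N4_nonneg (x : ℕ →₀ ℝ) : 0 ≤ N4 x := (supNorm_nonneg x).trans (supNorm_le_N4 x)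

lemma half_sum_N4_le (x : ℕ →₀ ℝ) {n m : ℕ} (hn : 0 < n) (hm : m = 3 * n)
    {E : Fin m → Finset ℕ} (hE : AdmissibleOn n m E) :
    (1 / 2) * ∑ i, N4 (restr (E i) x) ≤ N4 x := by
  subst hm
  refine le_of_tendsto' (Filter.Tendsto.const_mul _
    (tendsto_finsetSum _ fun i _ => tendsto_N4Aux (restr (E i) x))) fun k => ?_
  exact (half_sum_N4Aux_le k x hn hE).trans (N4Aux_le_N4 (k + 1) x)

/-! ### Optimal splittings into three successive pieces -/

/-- The values `∑ N4 (T r y)` over all successive triples `T` of subsets of the support of `y`. -/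
def tripleSet (y : ℕ →₀ ℝ) : Set ℝ :=
  {s | ∃ T : Fin 3 → Finset ℕ, AdmissibleOn 0 3 T ∧ (∀ r, T r ⊆ y.support) ∧
    s = ∑ r, N4 (restr (T r) y)}

/-- The largest value of `∑ N4 (T r y)` over all successive triples `T` of subsets of the support
of `y`. -/
def tripleMax (y : ℕ →₀ ℝ) : ℝ := sSup (tripleSet y)

lemma tripleSet_finite (y : ℕ →₀ ℝ) : (tripleSet y).Finite := by
  refine ((Fintype.piFinset fun _ : Fin 3 => y.support.powerset).image
    fun T => ∑ r, N4 (restr (T r) y)).finite_toSet.subset ?_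
  rintro s ⟨T, -, hT, rfl⟩
  simp only [Finset.coe_image, Set.mem_image, Finset.mem_coe]
  exact ⟨T, by simpa [Fintype.mem_piFinset] using hT, rfl⟩

lemma tripleSet_nonempty (y : ℕ →₀ ℝ) : (tripleSet y).Nonempty :=
  ⟨_, fun _ => ∅, by simp [AdmissibleOn], by simp, rfl⟩

lemma exists_eq_tripleMax (y : ℕ →₀ ℝ) : ∃ T : Fin 3 → Finset ℕ, AdmissibleOn 0 3 T ∧
    (∀ r, T r ⊆ y.support) ∧ tripleMax y = ∑ r, N4 (restr (T r) y) :=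
  (tripleSet_nonempty y).csSup_mem (tripleSet_finite y)

lemma sum_le_tripleMax {y : ℕ →₀ ℝ} {T : Fin 3 → Finset ℕ} (hT : AdmissibleOn 0 3 T)
    (hs : ∀ r, T r ⊆ y.support) : ∑ r, N4 (restr (T r) y) ≤ tripleMax y :=
  le_csSup (tripleSet_finite y).bddAbove ⟨T, hT, hs, rfl⟩

lemma tripleMax_nonneg (y : ℕ →₀ ℝ) : 0 ≤ tripleMax y := by
  obtain ⟨T, -, -, h⟩ := exists_eq_tripleMax y
  rw [h]
  exact Finset.sum_nonneg fun _ _ => N4_nonneg _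

/-- Three-piece version of `sum_le_tripleMax`. -/
lemma add_add_le_tripleMax {y : ℕ →₀ ℝ} {A B C : Finset ℕ} (hA : A ⊆ y.support)
    (hB : B ⊆ y.support) (hC : C ⊆ y.support) (hAB : ∀ a ∈ A, ∀ b ∈ B, a < b)
    (hAC : ∀ a ∈ A, ∀ c ∈ C, a < c) (hBC : ∀ b ∈ B, ∀ c ∈ C, b < c) :
    N4 (restr A y) + N4 (restr B y) + N4 (restr C y) ≤ tripleMax y := by
  have h := sum_le_tripleMax (y := y) (T := ![A, B, C]) ?_ ?_
  · simpa [Fin.sum_univ_three] using h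
  · refine ⟨fun i j hij => ?_, by simp⟩
    fin_cases i <;> fin_cases j <;> first | exact absurd hij (by decide) | assumption
  · intro r
    fin_cases r <;> assumption

lemma N4_le_tripleMax (y : ℕ →₀ ℝ) : N4 y ≤ tripleMax y := by
  have h := add_add_le_tripleMax (y := y) (A := y.support) (B := ∅) (C := ∅)
    subset_rfl (by simp) (by simp) (by simp) (by simp) (by simp)
  rw [restr_support_self] at h
  have := N4_nonneg (restr ∅ y)
  linarith

/-- The optimal splittings of `E 1 x, …, E n x` together form `3 n` successive sets that are
admissible for `N4`. -/
lemma half_sum_tripleMax_le (x : ℕ →₀ ℝ) {n : ℕ} (hn : 0 < n) {E : Fin n → Finset ℕ}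
    (hE : Admissible n E) : (1 / 2) * ∑ i, tripleMax (restr (E i) x) ≤ N4 x := by
  choose T hT _ hsum using fun i => exists_eq_tripleMax (restr (E i) x)
  have key := half_sum_N4_le x hn (Nat.mul_comm n 3)
    (E := fun t => T t.divNat t.modNat ∩ E t.divNat) ?_
  · refine le_trans (le_of_eq ?_) key
    congr 1
    rw [← finProdFinEquiv.sum_comp, Fintype.sum_prod_type]
    refine Finset.sum_congr rfl fun i _ => ?_
    rw [hsum i]
    refine Finset.sum_congr rfl fun r _ => ?_
    have hir := finProdFinEquiv.symm_apply_apply (i, r)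
    rw [finProdFinEquiv_symm_apply, Prod.mk.injEq] at hir
    rw [hir.1, hir.2, restr_restr]
  · refine ⟨fun s t hst a ha b hb => ?_, fun s a ha => ?_⟩
    · rw [Finset.mem_inter] at ha hb
      rcases lt_trichotomy s.divNat t.divNat with h | h | h
      · exact hE.1 _ _ h a ha.2 b hb.2
      · refine (hT t.divNat).1 s.modNat t.modNat ?_ a (h ▸ ha.1) b hb.1
        rw [Fin.lt_def] at hst ⊢
        have h' := congrArg Fin.val h
        simp only [Fin.coe_divNat, Fin.coe_modNat] at h' ⊢
        omega
      · exfalso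
        rw [Fin.lt_def] at hst h
        simp only [Fin.coe_divNat] at h
        omega
    · exact hE.2 _ a (Finset.mem_inter.1 ha).2

/-! ### Comparison of `N2` with optimal splittings -/

/-- A subfamily of an admissible family, living on `A`, has half-sum at most `N4 (A y)`, provided
the `k`-th iterate is dominated by `tripleMax`. The omitted sets are replaced by empty ones. -/
lemma half_sum_filter_le {k : ℕ} (ih : ∀ y, N2Aux (1 / 2) k y ≤ tripleMax y) (y : ℕ →₀ ℝ)
    {n : ℕ} {E : Fin n → Finset ℕ} (hE : Admissible n E) (p : Fin n → Prop) [DecidablePred p]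
    {A : Finset ℕ} (hA : ∀ i, p i → ∀ a ∈ E i, a ∈ y.support → a ∈ A) :
    (1 / 2) * ∑ i with p i, N2Aux (1 / 2) k (restr (E i) y) ≤ N4 (restr A y) := by
  rcases Nat.eq_zero_or_pos n with rfl | hn
  · simpa using N4_nonneg (restr A y)
  · have hE' : Admissible n fun i => if p i then E i else ∅ := by
      refine ⟨fun i j hij a ha b hb => ?_, fun i a ha => ?_⟩
      · dsimp only at ha hb
        split_ifs at ha hb
        · exact hE.1 i j hij a ha b hb
        all_goals simp at ha hb
      · dsimp only at ha
        split_ifs at ha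
        · exact hE.2 i a ha
        · simp at ha
    refine le_trans ?_ (half_sum_tripleMax_le (restr A y) hn hE')
    refine mul_le_mul_of_nonneg_left ?_ (by norm_num)
    rw [Finset.sum_filter]
    refine Finset.sum_le_sum fun i _ => ?_
    by_cases hi : p i
    · rw [if_pos hi, if_pos hi, restr_restr_of_inter_subset (hA i hi)]
      exact ih _
    · rw [if_neg hi]
      exact tripleMax_nonneg _

lemma N2Aux_le_tripleMax (k : ℕ) : ∀ y : ℕ →₀ ℝ, N2Aux (1 / 2) k y ≤ tripleMax y := by
  classical
  induction k with
  | zero => exact fun y => (supNorm_le_N4 y).trans (N4_le_tripleMax y)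
  | succ k ih =>
    intro y
    refine max_le ((supNorm_le_N4 y).trans (N4_le_tripleMax y))
      (Real.sSup_le ?_ (tripleMax_nonneg y))
    rintro r ⟨n, E, i₀, hE, rfl⟩
    -- `A` and `C` carry the sets before and after `i₀`; `B` is everything strictly in between.
    set A := y.support.filter fun a => ∃ i, i < i₀ ∧ a ∈ E i
    set C := y.support.filter fun a => ∃ i, i₀ < i ∧ a ∈ E i
    set B := y.support.filter fun b =>
      (∀ i, i < i₀ → ∀ a ∈ E i, a < b) ∧ (∀ i, i₀ < i → ∀ a ∈ E i, b < a)
    have hleft := half_sum_filter_le ih y hE (fun i => i < i₀) (A := A)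
      fun i hi a ha hs => Finset.mem_filter.2 ⟨hs, i, hi, ha⟩
    have hright := half_sum_filter_le ih y hE (fun i => i₀ < i) (A := C)
      fun i hi a ha hs => Finset.mem_filter.2 ⟨hs, i, hi, ha⟩
    have hmid : sSup {t : ℝ | ∃ (m : ℕ) (F : Fin m → Finset ℕ), Admissible m F ∧ Between E i₀ F ∧
        t = ∑ j, N2Aux (1 / 2) k (restr (F j) y)} ≤ 2 * N4 (restr B y) := by
      refine Real.sSup_le ?_ (mul_nonneg (by norm_num) (N4_nonneg _))
      rintro t ⟨m, F, hF, hbt, rfl⟩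
      have h := half_sum_filter_le ih y hF (fun _ => True) (A := B)
        fun j _ b hb hs => Finset.mem_filter.2 ⟨hs, hbt j b hb⟩
      rw [Finset.filter_true] at h
      linarith
    have hsplit : ∑ i ∈ Finset.univ.erase i₀, N2Aux (1 / 2) k (restr (E i) y) =
        ∑ i with i < i₀, N2Aux (1 / 2) k (restr (E i) y) +
        ∑ i with i₀ < i, N2Aux (1 / 2) k (restr (E i) y) := by
      rw [← Finset.sum_union]
      · refine Finset.sum_congr ?_ fun _ _ => rfl
        ext i
        simp [lt_or_lt_iff_ne]
      · rw [Finset.disjoint_filter]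
        exact fun i _ h => not_lt_of_gt h
    have htriple : N4 (restr A y) + N4 (restr B y) + N4 (restr C y) ≤ tripleMax y := by
      refine add_add_le_tripleMax (Finset.filter_subset _ _) (Finset.filter_subset _ _)
        (Finset.filter_subset _ _) ?_ ?_ ?_
      · intro a ha b hb
        obtain ⟨-, i, hi, hai⟩ := Finset.mem_filter.1 ha
        exact (Finset.mem_filter.1 hb).2.1 i hi a hai
      · intro a ha c hc
        obtain ⟨-, i, hi, hai⟩ := Finset.mem_filter.1 ha
        obtain ⟨-, j, hj, hcj⟩ := Finset.mem_filter.1 hc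
        exact hE.1 i j (hi.trans hj) a hai c hcj
      · intro b hb c hc
        obtain ⟨-, j, hj, hcj⟩ := Finset.mem_filter.1 hc
        exact (Finset.mem_filter.1 hb).2.2 j hj c hcj
    rw [hsplit]
    linarith

/-- `N^{(3)}(x) ≤ N^{(4)}(x)` for every finitely supported `x`. -/
theorem stmt16 : ∀ x : ℕ →₀ ℝ, N3 x ≤ N4 x := by
  intro x
  refine max_le (supNorm_le_N4 x) (Real.sSup_le ?_ (N4_nonneg x))
  rintro r ⟨n, E, hn, hE, rfl⟩
  refine le_trans ?_ (half_sum_tripleMax_le x hn hE)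
  refine mul_le_mul_of_nonneg_left (Finset.sum_le_sum fun i _ => ?_) (by norm_num)
  exact ciSup_le fun k => N2Aux_le_tripleMax k _
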